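/- Let i_0, j_0 be coprime positive integers. For each integer m with 1 ≤ m ≤ i_0 − 1, set n'_m := i_0 − ((j_0 m) mod i_0), so that (m j_0 + n'_m)/i_0 is a positive integer. Then {(a j_0 + b, a i_0) : a, b ∈ ℝ, a > 0, b > 0} ∩ ℤ² = {(a j_0 + b, a i_0) : a, b ∈ ℤ, a ≥ 1, b ≥ 1} ∪ ⋃_{m=1}^{i_0−1} { ((m j_0 + n'_m)/i_0 + a j_0 + b, m + a i_0) : a, b ∈ ℤ, a ≥ 0, b ≥ 0 }. -/

import Mathlib

/-!
A point `(x, y)` lies in the open cone spanned by `(j, i)` and `(1, 0)` iff `0 < y` and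
`y * j < x * i`, so the lattice points of the cone in row `n > 0` are the `(p, n)` with
`⌊n j / i⌋ + 1 ≤ p`. Translation by `(j, i)` shifts row `n` to row `n + i` and the leftmost point
of one to that of the other, so only the rows `0 ≤ m < i` matter, and in such a row the least
abscissa `⌊m j / i⌋ + 1` equals `(m j + n'_m) / i`. Row `0` itself lies outside the cone, which is
why the residue `m = 0` needs `a ≥ 1`; there the least abscissa is `1`, whence `b ≥ 1`.
-/

/-- The open cone `Δ_{γ₄}` in `K²` spanned by `(j, i)` and `(1, 0)`. -/
def openCone {K : Type*} [Semiring K] [PartialOrder K] (i j : K) : Set (K × K) :=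
  {x | ∃ a b : K, 0 < a ∧ 0 < b ∧ x = (a * j + b, a * i)}

/-- The least first coordinate of a lattice point `(p, n)` lying strictly to the right of the line
through `(0, 0)` and `(j, i)`, for `0 < i`. -/
def rowStart (i j n : ℤ) : ℤ := n * j / i + 1

section Cone

variable {K : Type*} [Field K] [LinearOrder K] [IsStrictOrderedRing K]

theorem mk_mem_openCone_iff {i j x y : K} (hi : 0 < i) :
    (x, y) ∈ openCone i j ↔ 0 < y ∧ y * j < x * i := by
  constructor
  · rintro ⟨a, b, ha, hb, hxy⟩
    obtain ⟨rfl, rfl⟩ := Prod.mk.inj hxy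
    refine ⟨mul_pos ha hi, ?_⟩
    calc a * i * j < a * i * j + b * i := lt_add_of_pos_right _ (mul_pos hb hi)
      _ = (a * j + b) * i := by ring
  · rintro ⟨hy, hxy⟩
    have hx : y / i * j < x := by rwa [div_mul_eq_mul_div, div_lt_iff₀ hi]
    exact ⟨y / i, x - y / i * j, div_pos hy hi, sub_pos.mpr hx,
      Prod.ext (add_sub_cancel _ _).symm (div_mul_cancel₀ y hi.ne').symm⟩

theorem intCast_mem_openCone_iff {i j p n : ℤ} (hi : 0 < i) :
    ((p : K), (n : K)) ∈ openCone (i : K) (j : K) ↔ 0 < n ∧ rowStart i j n ≤ p := by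
  rw [mk_mem_openCone_iff (Int.cast_pos.mpr hi), rowStart, Int.add_one_le_iff,
    Int.ediv_lt_iff_lt_mul hi]
  norm_cast

end Cone

section RowStart

variable {i j : ℤ}

theorem rowStart_zero : rowStart i j 0 = 1 := by
  simp [rowStart]

theorem rowStart_add_mul (hi : i ≠ 0) (n a : ℤ) :
    rowStart i j (n + a * i) = rowStart i j n + a * j := by
  have h : (n + a * i) * j = n * j + a * j * i := by ring
  rw [rowStart, rowStart, h, Int.add_mul_ediv_right _ _ hi, add_right_comm]

theorem rowStart_mul (n : ℤ) : rowStart i j n * i = n * j + (i - j * n % i) := by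
  rw [rowStart, mul_comm j n]
  linarith [Int.ediv_mul_add_emod (n * j) i]

theorem rowStart_pos {n : ℤ} (hi : 0 ≤ i) (hj : 0 ≤ j) (hn : 0 ≤ n) : 0 < rowStart i j n :=
  Int.lt_add_one_of_le (Int.ediv_nonneg (mul_nonneg hn hj) hi)

end RowStart

section Residues

variable {i : ℕ} {j p n : ℤ}

theorem exists_eq_rowStart_add_of_rowStart_le (hi : 0 < i) (hn : 0 ≤ n)
    (hp : rowStart i j n ≤ p) :
    ∃ m a b : ℕ, m < i ∧ p = rowStart i j m + a * j + b ∧ n = m + a * i := by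
  lift n to ℕ using hn
  have hdecomp : (n : ℤ) = (n % i : ℕ) + (n / i : ℕ) * i := by
    exact_mod_cast (Nat.mod_add_div' n i).symm
  obtain ⟨b, hb⟩ := Int.exists_add_of_le hp
  refine ⟨n % i, n / i, b, Nat.mod_lt n hi, ?_, hdecomp⟩
  rw [← rowStart_add_mul (by exact_mod_cast hi.ne'), ← hdecomp, hb]

theorem pos_and_rowStart_le_iff (hi : 0 < i) :
    0 < n ∧ rowStart i j n ≤ p ↔
      (∃ a b : ℕ, 1 ≤ a ∧ 1 ≤ b ∧ p = a * j + b ∧ n = a * i) ∨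
        ∃ m ∈ Finset.Icc 1 (i - 1), ∃ a b : ℕ,
          p = rowStart i j m + a * j + b ∧ n = m + a * i := by
  have hi' : (i : ℤ) ≠ 0 := by exact_mod_cast hi.ne'
  constructor
  · rintro ⟨hn, hp⟩
    obtain ⟨m, a, b, hm, rfl, rfl⟩ := exists_eq_rowStart_add_of_rowStart_le hi hn.le hp
    rcases m.eq_zero_or_pos with rfl | hm_pos
    · have ha : a ≠ 0 := by
        rintro rfl
        simp at hn
      refine .inl ⟨a, b + 1, Nat.one_le_iff_ne_zero.mpr ha, Nat.le_add_left 1 b, ?_, ?_⟩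
      · rw [Nat.cast_zero, rowStart_zero]
        push_cast
        ring
      · rw [Nat.cast_zero, zero_add]
    · exact .inr ⟨m, Finset.mem_Icc.mpr ⟨hm_pos, Nat.le_sub_one_of_lt hm⟩, a, b, rfl, rfl⟩
  · rintro (⟨a, b, ha, hb, rfl, rfl⟩ | ⟨m, hm, a, b, rfl, rfl⟩)
    · have hrow : rowStart i j (a * i) = 1 + a * j := by
        simpa only [zero_add, rowStart_zero] using rowStart_add_mul (j := j) hi' 0 a
      refine ⟨by positivity, ?_⟩
      rw [hrow]
      omega
    · have hm_pos : 0 < m := (Finset.mem_Icc.mp hm).1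
      refine ⟨by positivity, ?_⟩
      rw [rowStart_add_mul hi']
      exact le_add_of_nonneg_right b.cast_nonneg

end Residues

theorem openCone_inter_intCast_eq (K : Type*) [Field K] [LinearOrder K] [IsStrictOrderedRing K]
    {i : ℕ} (hi : 0 < i) (j : ℤ) :
    openCone (i : K) (j : K) ∩ {x | ∃ p n : ℤ, x = ((p : K), (n : K))} =
      {x | ∃ a b : ℕ, 1 ≤ a ∧ 1 ≤ b ∧ x = ((a : K) * (j : K) + (b : K), (a : K) * (i : K))} ∪
        ⋃ m ∈ Finset.Icc 1 (i - 1),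
          {x | ∃ a b : ℕ, x = ((rowStart i j m : K) + (a : K) * (j : K) + (b : K),
            (m : K) + (a : K) * (i : K))} := by
  have hmem (p n : ℤ) := (intCast_mem_openCone_iff (K := K) (j := j) (p := p) (n := n)
    (Int.natCast_pos.mpr hi)).trans (pos_and_rowStart_le_iff hi)
  rw [Int.cast_natCast] at hmem
  ext x
  simp only [Set.mem_inter_iff, Set.mem_union, Set.mem_iUnion, Set.mem_ofPred_eq, exists_prop]
  constructor
  · rintro ⟨hx, p, n, rfl⟩
    refine ((hmem p n).mp hx).imp ?_ ?_
    · rintro ⟨a, b, ha, hb, rfl, rfl⟩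
      exact ⟨a, b, ha, hb, by push_cast; rfl⟩
    · rintro ⟨m, hm, a, b, rfl, rfl⟩
      exact ⟨m, hm, a, b, by push_cast; rfl⟩
  · rintro (⟨a, b, ha, hb, rfl⟩ | ⟨m, hm, a, b, rfl⟩)
    · have h := (hmem _ _).mpr (.inl ⟨a, b, ha, hb, rfl, rfl⟩)
      push_cast at h
      exact ⟨h, a * j + b, a * i, by push_cast; rfl⟩
    · have h := (hmem _ _).mpr (.inr ⟨m, hm, a, b, rfl, rfl⟩)
      push_cast at h
      exact ⟨h, rowStart i j m + a * j + b, m + a * i, by push_cast; rfl⟩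

theorem lattice_points_of_cone_general (K : Type*) [Field K] [LinearOrder K]
    [IsStrictOrderedRing K] {i : ℕ} (hi : 0 < i) (j : ℤ) (n' : ℕ → ℤ)
    (hn' : ∀ m : ℕ, n' m = i - j * m % i) :
    (∀ m : ℕ, (i : ℤ) ∣ m * j + n' m ∧ (0 ≤ j → 0 < (m * j + n' m) / i)) ∧
    (openCone (i : K) (j : K) ∩ {x | ∃ p n : ℤ, x = ((p : K), (n : K))} =
      {x | ∃ a b : ℕ, 1 ≤ a ∧ 1 ≤ b ∧ x = ((a : K) * (j : K) + (b : K), (a : K) * (i : K))} ∪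
        ⋃ m ∈ Finset.Icc 1 (i - 1),
          {x | ∃ a b : ℕ, x = (((m * j + n' m : ℤ) : K) / (i : K) + (a : K) * (j : K) + (b : K),
            (m : K) + (a : K) * (i : K))}) := by
  have hi_pos : (0 : ℤ) < i := Int.natCast_pos.mpr hi
  have hi_ne : (i : K) ≠ 0 := Nat.cast_ne_zero.mpr hi.ne'
  have hrow (m : ℕ) : m * j + n' m = rowStart i j m * i := by rw [hn', rowStart_mul]
  have hrow_div (m : ℕ) : ((m * j + n' m : ℤ) : K) / i = (rowStart i j m : K) := by
    rw [hrow, Int.cast_mul, Int.cast_natCast, mul_div_cancel_right₀ _ hi_ne]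
  refine ⟨fun m ↦ ?_, ?_⟩
  · rw [hrow, Int.mul_ediv_cancel _ hi_pos.ne']
    exact ⟨dvd_mul_left _ _, fun hj ↦ rowStart_pos hi_pos.le hj m.cast_nonneg⟩
  · simp only [hrow_div, openCone_inter_intCast_eq K hi j]

/-- **Lemma 2.5, case `c = 4`.** Let `i0, j0` be coprime positive integers and, for
`1 ≤ m ≤ i0 - 1`, set `n'_m := i0 - ((j0 m) mod i0)`, so that `(m j0 + n'_m)/i0` is a
positive integer. Then the lattice points of the open cone
`{(a j0 + b, a i0) : a, b > 0}` are
`{(a j0 + b, a i0) : a, b ∈ ℤ, a, b ≥ 1} ∪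
  ⋃_{m=1}^{i0-1} {((m j0 + n'_m)/i0 + a j0 + b, m + a i0) : a, b ∈ ℤ, a, b ≥ 0}`. -/
theorem lattice_points_of_cone (i0 j0 : ℕ) (hi0 : 0 < i0) (hj0 : 0 < j0)
    (hco : Nat.Coprime i0 j0) (n' : ℕ → ℕ) (hn' : ∀ m, n' m = i0 - (j0 * m) % i0) :
    (∀ m : ℕ, 1 ≤ m → m ≤ i0 - 1 →
      i0 ∣ m * j0 + n' m ∧ 0 < (m * j0 + n' m) / i0) ∧
    ({x : ℝ × ℝ | ∃ a b : ℝ, 0 < a ∧ 0 < b ∧ x = (a * (j0 : ℝ) + b, a * (i0 : ℝ))} ∩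
        {x : ℝ × ℝ | ∃ m n : ℤ, x = ((m : ℝ), (n : ℝ))} =
      {x : ℝ × ℝ | ∃ a b : ℕ, 1 ≤ a ∧ 1 ≤ b ∧
          x = ((a : ℝ) * (j0 : ℝ) + (b : ℝ), (a : ℝ) * (i0 : ℝ))} ∪
        ⋃ m ∈ Finset.Icc 1 (i0 - 1),
          {x : ℝ × ℝ | ∃ a b : ℕ,
            x = (((m * j0 + n' m : ℕ) : ℝ) / (i0 : ℝ) + (a : ℝ) * (j0 : ℝ) + (b : ℝ),
                 (m : ℝ) + (a : ℝ) * (i0 : ℝ))}) := by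
  obtain ⟨hdiv, hset⟩ := lattice_points_of_cone_general ℝ hi0 j0 (fun m ↦ n' m) fun m ↦ by
    rw [hn', Nat.cast_sub (Nat.mod_lt _ hi0).le]; norm_cast
  exact ⟨fun m _ _ ↦ by exact_mod_cast (hdiv m).imp_right (· j0.cast_nonneg),
    by simpa [openCone] using hset⟩
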